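/- Let 𝒯 be an S-nice tree decomposition of a graph G=(V,E) for some S ⊆ V. Let t be an S-bottom node of 𝒯 that admits the S-operation join, with the two S-children t_1 and t_2. Then L_{t_1}^S ∪ L_{t_2}^S = L_t^S, L_{t_1}^S ∩ L_{t_2}^S = ∅, L_{t_1}^S ≠ ∅, L_{t_2}^S ≠ ∅, R_{t_1}^S = R_t^S ∪ (X_t^S ∖ X_{t_1}^S) ∪ L_{t_2}^S, and R_{t_2}^S = R_t^S ∪ (X_t^S ∖ X_{t_2}^S) ∪ L_{t_1}^S. -/

import Mathlib

/-! Preliminary definitions: rooted tree decompositions, `S`-traces, `S`-nice and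
slim tree decompositions, following Chapelle et al. -/

/-- A walk in `G` all of whose vertices lie in the set `W`. -/
def SimpleGraph.ReachableIn {V : Type} (G : SimpleGraph V) (W : Set V) (u v : V) : Prop :=
  ∃ p : G.Walk u v, ∀ x ∈ p.support, x ∈ W

/-- The open neighborhood of a set of vertices. -/
def SimpleGraph.nbhdSet {V : Type} (G : SimpleGraph V) (W : Set V) : Set V :=
  {x | x ∉ W ∧ ∃ w ∈ W, G.Adj w x}

/-- The vertex set of the connected component of `G − X` that contains `v`
(assuming `v ∉ X`). -/
def SimpleGraph.compOutside {V : Type} (G : SimpleGraph V) (X : Set V) (v : V) : Set V :=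
  {w | G.ReachableIn Xᶜ v w}

/-- A rooted tree decomposition of a graph `G` on vertex type `V`, with node type `ι`.
The rooted tree is given by a parent function: the root is a fixed point of `parent`
and every node reaches the root by iterating `parent`.  The bags satisfy the three
usual conditions of a tree decomposition; connectedness of `{t | v ∈ bag t}` is
expressed by the existence of a highest node `m` containing `v` such that from any
node whose bag contains `v` the whole ancestor chain up to `m` contains `v`. -/
structure RootedTreeDecomp (V ι : Type) (G : SimpleGraph V) where
  root : ι
  parent : ι → ι
  parent_root : parent root = root
  reaches_root : ∀ t : ι, ∃ n : ℕ, parent^[n] t = root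
  bag : ι → Set V
  bags_cover : ∀ v : V, ∃ t : ι, v ∈ bag t
  bags_of_edges : ∀ ⦃u v : V⦄, G.Adj u v → ∃ t : ι, u ∈ bag t ∧ v ∈ bag t
  bags_connected : ∀ v : V, ∃ m : ι, v ∈ bag m ∧
    ∀ t : ι, v ∈ bag t → ∃ n : ℕ, parent^[n] t = m ∧ ∀ i ≤ n, v ∈ bag (parent^[i] t)

namespace RootedTreeDecomp

variable {V ι : Type} {G : SimpleGraph V}

/-- `t'` lies in the subtree `T_t` rooted at `t`; equivalently, `t` is an
ancestor (possibly equal) of `t'`. -/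
def InSubtree (𝒯 : RootedTreeDecomp V ι G) (t t' : ι) : Prop :=
  ∃ n : ℕ, 𝒯.parent^[n] t' = t

/-- `t` is the parent of `t'`. -/
def IsParent (𝒯 : RootedTreeDecomp V ι G) (t t' : ι) : Prop :=
  t' ≠ 𝒯.root ∧ 𝒯.parent t' = t

/-- `V_t`: the union of the bags of the nodes of the subtree rooted at `t`. -/
def Vt (𝒯 : RootedTreeDecomp V ι G) (t : ι) : Set V :=
  {v | ∃ t', 𝒯.InSubtree t t' ∧ v ∈ 𝒯.bag t'}

/-- `L_t = V_t ∖ X_t`. -/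
def Lt (𝒯 : RootedTreeDecomp V ι G) (t : ι) : Set V := 𝒯.Vt t \ 𝒯.bag t

/-- `R_t = V ∖ V_t`. -/
def Rt (𝒯 : RootedTreeDecomp V ι G) (t : ι) : Set V := (𝒯.Vt t)ᶜ

/-- `L_t^S = L_t ∩ S`. -/
def LS (𝒯 : RootedTreeDecomp V ι G) (S : Set V) (t : ι) : Set V := 𝒯.Lt t ∩ S

/-- `X_t^S = X_t ∩ S`. -/
def XS (𝒯 : RootedTreeDecomp V ι G) (S : Set V) (t : ι) : Set V := 𝒯.bag t ∩ S

/-- `R_t^S = R_t ∩ S`. -/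
def RS (𝒯 : RootedTreeDecomp V ι G) (S : Set V) (t : ι) : Set V := 𝒯.Rt t ∩ S

/-- The `S`-trace of a node `t`. -/
def STrace (𝒯 : RootedTreeDecomp V ι G) (S : Set V) (t : ι) : Set V × Set V × Set V :=
  (𝒯.LS S t, 𝒯.XS S t, 𝒯.RS S t)

/-- Every bag has size at most `k + 1`, i.e. the width is at most `k`. -/
def WidthAtMost (𝒯 : RootedTreeDecomp V ι G) (k : ℕ) : Prop :=
  ∀ t : ι, (𝒯.bag t).ncard ≤ k + 1

/-- The width of the decomposition (max bag size minus one) is exactly `k`. -/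
def HasWidth (𝒯 : RootedTreeDecomp V ι G) (k : ℕ) : Prop :=
  𝒯.WidthAtMost k ∧ ∃ t : ι, (𝒯.bag t).ncard = k + 1

/-- `t'` is an `S`-child of `t`. -/
def IsSChild (𝒯 : RootedTreeDecomp V ι G) (S : Set V) (t t' : ι) : Prop :=
  𝒯.IsParent t t' ∧ ((𝒯.LS S t' ∪ 𝒯.XS S t') \ (𝒯.RS S t ∪ 𝒯.XS S t)).Nonempty

/-- `t` is an `S`-bottom node: `L_t^S ≠ ∅` and `t` is the bottom node of the
directed path of its own `S`-trace (every node with the same `S`-trace is an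
ancestor of `t`). -/
def IsSBottom (𝒯 : RootedTreeDecomp V ι G) (S : Set V) (t : ι) : Prop :=
  (𝒯.LS S t).Nonempty ∧ ∀ t', 𝒯.STrace S t' = 𝒯.STrace S t → 𝒯.InSubtree t' t

/-- `t` admits the `S`-operation `introduce(v)`. -/
def AdmitsIntroduce (𝒯 : RootedTreeDecomp V ι G) (S : Set V) (t : ι) (v : V) : Prop :=
  ∃ t₁, 𝒯.IsSChild S t t₁ ∧ (∀ t₂, 𝒯.IsSChild S t t₂ → t₂ = t₁) ∧
    v ∈ S ∧ v ∉ 𝒯.bag t₁ ∧ 𝒯.XS S t = 𝒯.XS S t₁ ∪ {v}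

/-- `t` admits the `S`-operation `forget(v)`. -/
def AdmitsForget (𝒯 : RootedTreeDecomp V ι G) (S : Set V) (t : ι) (v : V) : Prop :=
  ∃ t₁, 𝒯.IsSChild S t t₁ ∧ (∀ t₂, 𝒯.IsSChild S t t₂ → t₂ = t₁) ∧
    v ∈ S ∧ v ∈ 𝒯.bag t₁ ∧ 𝒯.XS S t = 𝒯.XS S t₁ \ {v}

/-- `t` admits the `S`-operation `join` with the two `S`-children `t₁, t₂`. -/
def AdmitsJoin (𝒯 : RootedTreeDecomp V ι G) (S : Set V) (t t₁ t₂ : ι) : Prop :=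
  t₁ ≠ t₂ ∧ 𝒯.IsSChild S t t₁ ∧ 𝒯.IsSChild S t t₂ ∧
    (∀ t₃, 𝒯.IsSChild S t t₃ → t₃ = t₁ ∨ t₃ = t₂) ∧
    𝒯.XS S t₁ ∪ 𝒯.XS S t₂ ⊆ 𝒯.XS S t

/-- `S`-nice tree decomposition: bags along tree edges are comparable and differ in
size by at most one, and every `S`-bottom node admits one of the `S`-operations. -/
def IsSNice (𝒯 : RootedTreeDecomp V ι G) (S : Set V) : Prop :=
  (∀ t t' : ι, 𝒯.IsParent t' t →
      (𝒯.bag t ⊆ 𝒯.bag t' ∨ 𝒯.bag t' ⊆ 𝒯.bag t) ∧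
      (𝒯.bag t).ncard ≤ (𝒯.bag t').ncard + 1 ∧ (𝒯.bag t').ncard ≤ (𝒯.bag t).ncard + 1) ∧
  ∀ t : ι, 𝒯.IsSBottom S t →
    (∃ v, 𝒯.AdmitsIntroduce S t v) ∨ (∃ v, 𝒯.AdmitsForget S t v) ∨
      (∃ t₁ t₂, 𝒯.AdmitsJoin S t t₁ t₂)

/-- Nice tree decomposition: root and leaves have empty bags, and every internal
node is an introduce, forget, or join node. -/
def IsNice (𝒯 : RootedTreeDecomp V ι G) : Prop :=
  𝒯.bag 𝒯.root = ∅ ∧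
  (∀ t : ι, (∀ t', ¬𝒯.IsParent t t') → 𝒯.bag t = ∅) ∧
  ∀ t : ι, (∃ t', 𝒯.IsParent t t') →
    (∃ t', 𝒯.IsParent t t' ∧ (∀ t'', 𝒯.IsParent t t'' → t'' = t') ∧
      ((∃ v, v ∉ 𝒯.bag t' ∧ 𝒯.bag t = 𝒯.bag t' ∪ {v}) ∨
        (∃ v, v ∈ 𝒯.bag t' ∧ 𝒯.bag t = 𝒯.bag t' \ {v}))) ∨
    (∃ t₁ t₂, t₁ ≠ t₂ ∧ 𝒯.IsParent t t₁ ∧ 𝒯.IsParent t t₂ ∧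
      (∀ t₃, 𝒯.IsParent t t₃ → t₃ = t₁ ∨ t₃ = t₂) ∧
      𝒯.bag t = 𝒯.bag t₁ ∧ 𝒯.bag t = 𝒯.bag t₂)

/-- A set of nodes inducing a connected subtree of the tree: it contains a node `m`
such that from every node of the set the whole ancestor chain up to `m` stays in
the set. -/
def ConnectedNodeSet (𝒯 : RootedTreeDecomp V ι G) (A : Set ι) : Prop :=
  ∃ m ∈ A, ∀ t ∈ A, ∃ n : ℕ, 𝒯.parent^[n] t = m ∧ ∀ i ≤ n, 𝒯.parent^[i] t ∈ A

/-- A full join tree: a non-trivial inclusion-maximal connected set of nodes all of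
which share one and the same full bag `X` (of size `k + 1`). -/
def IsFullJoinTree (𝒯 : RootedTreeDecomp V ι G) (k : ℕ) (A : Set ι) (X : Set V) : Prop :=
  A.Nontrivial ∧ 𝒯.ConnectedNodeSet A ∧ X.ncard = k + 1 ∧ (∀ t ∈ A, 𝒯.bag t = X) ∧
  ∀ A' : Set ι, A ⊆ A' → 𝒯.ConnectedNodeSet A' → (∀ t ∈ A', 𝒯.bag t = X) → A' = A

/-- `m` is the root (top node) of the node set `A`. -/
def IsTopOf (𝒯 : RootedTreeDecomp V ι G) (A : Set ι) (m : ι) : Prop :=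
  m ∈ A ∧ ∀ t ∈ A, 𝒯.InSubtree m t

/-- The condition on a pair `(u, ti)` appearing in condition (7) of slimness:
either `ti` belongs to `T'_C` (it is an `S`-child of a node of the full join tree
`A` but is not itself in `A`) and `u ∈ V_{ti}`, or `ti` is the parent of the root
`tr` of the full join tree and `u ∈ V ∖ V_{tr}`. -/
def FullJoinBranch (𝒯 : RootedTreeDecomp V ι G) (S : Set V) (A : Set ι) (tr : ι)
    (u : V) (ti : ι) : Prop :=
  (ti ∉ A ∧ (∃ ta ∈ A, 𝒯.IsSChild S ta ti) ∧ u ∈ 𝒯.Vt ti) ∨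
  (tr ≠ 𝒯.root ∧ ti = 𝒯.parent tr ∧ u ∉ 𝒯.Vt tr)

/-- Slim `S`-nice tree decomposition of width `k` (the seven conditions of the
paper; a bag is *full* if it has size `k + 1`). -/
def IsSlim (𝒯 : RootedTreeDecomp V ι G) (S : Set V) (k : ℕ) : Prop :=
  -- (1) the root is not an S-bottom node
  (¬𝒯.IsSBottom S 𝒯.root) ∧
  -- (2) S-bottom nodes with two S-children
  (∀ t t₁ t₂ : ι, 𝒯.IsSBottom S t → t₁ ≠ t₂ → 𝒯.IsSChild S t t₁ → 𝒯.IsSChild S t t₂ →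
    (∃ A X, 𝒯.IsFullJoinTree k A X ∧ t ∈ A) ∨
      ((𝒯.bag t₁).ncard ≠ k + 1 ∧ (𝒯.bag t₂).ncard ≠ k + 1 ∧
        (𝒯.bag t₁).ncard ≤ (𝒯.bag t).ncard ∧ (𝒯.bag t₂).ncard ≤ (𝒯.bag t).ncard ∧
        ∀ tp, 𝒯.IsParent tp t →
          (𝒯.bag tp).ncard ≠ k + 1 ∧ (𝒯.bag tp).ncard ≤ (𝒯.bag t).ncard)) ∧
  -- (3) S-bottom nodes with a non-full bag
  (∀ t tp : ι, 𝒯.IsSBottom S t → (𝒯.bag t).ncard ≠ k + 1 → 𝒯.IsParent tp t →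
    𝒯.bag t = 𝒯.bag tp ∧ ∀ t'', 𝒯.IsSChild S tp t'' → t'' = t) ∧
  -- (4) S-bottom nodes admitting forget(v)
  (∀ t v t', 𝒯.IsSBottom S t → 𝒯.AdmitsForget S t v → 𝒯.IsSChild S t t' →
    (𝒯.bag t').ncard ≠ k + 1 →
    (∀ t₁ t₂, 𝒯.IsSChild S t' t₁ → 𝒯.IsSChild S t' t₂ → t₁ = t₂) ∧
      ∀ t'', 𝒯.IsSChild S t' t'' → 𝒯.bag t' = 𝒯.bag t'') ∧
  -- (5) parents of S-bottom nodes with non-full bags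
  (∀ t tp, 𝒯.IsSBottom S t → 𝒯.IsParent tp t → (𝒯.bag tp).ncard ≠ k + 1 →
    tp = 𝒯.root ∨ ∀ tpp, 𝒯.IsParent tpp tp → ¬𝒯.IsSBottom S tpp) ∧
  -- (6) nodes of full join trees
  (∀ A X, 𝒯.IsFullJoinTree k A X → ∀ t ∈ A,
    𝒯.IsSBottom S t ∧ ∃ t₁ t₂, t₁ ≠ t₂ ∧ 𝒯.IsSChild S t t₁ ∧ 𝒯.IsSChild S t t₂) ∧
  -- (7) branching condition of full join trees
  (∀ A X tr, 𝒯.IsFullJoinTree k A X → 𝒯.IsTopOf A tr →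
    ∀ v ∈ X \ S, ∃ u₁ u₂ u₃ : V, ∃ t₁ t₂ t₃ : ι,
      u₁ ≠ u₂ ∧ u₁ ≠ u₃ ∧ u₂ ≠ u₃ ∧ t₁ ≠ t₂ ∧ t₁ ≠ t₃ ∧ t₂ ≠ t₃ ∧
      (G.Adj v u₁ ∧ u₁ ∉ X ∧ (∃ s ∈ S, G.ReachableIn Xᶜ u₁ s) ∧
        𝒯.FullJoinBranch S A tr u₁ t₁) ∧
      (G.Adj v u₂ ∧ u₂ ∉ X ∧ (∃ s ∈ S, G.ReachableIn Xᶜ u₂ s) ∧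
        𝒯.FullJoinBranch S A tr u₂ t₂) ∧
      (G.Adj v u₃ ∧ u₃ ∉ X ∧ (∃ s ∈ S, G.ReachableIn Xᶜ u₃ s) ∧
        𝒯.FullJoinBranch S A tr u₃ t₃))

end RootedTreeDecomp

/-- `tw(G) ≤ k`: `G` admits a (rooted) tree decomposition of width at most `k`. -/
def SimpleGraph.TreewidthAtMost {V : Type} (G : SimpleGraph V) (k : ℕ) : Prop :=
  ∃ (ι : Type) (𝒯 : RootedTreeDecomp V ι G), 𝒯.WidthAtMost k

/-! A vertex occurring both in the subtree rooted at `a` and in some bag outside that subtree must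
lie in the bag of `a`.  Applied to a child `c` of `t`, this gives `V_c ∩ X_t ⊆ X_c`, so that
`V_c ∩ L_t^S = L_c^S` as soon as `X_c^S ⊆ X_t^S`; applied to two siblings, it makes their sets
`L^S` disjoint.  Since `S = L_t^S ∪ X_t^S ∪ R_t^S`, the `S`-children of `t` are precisely the
children `c` for which `V_c` meets `L_t^S`, and hence their sets `V_c` cover `L_t^S`. -/

namespace RootedTreeDecomp

variable {V ι : Type} {G : SimpleGraph V} {𝒯 : RootedTreeDecomp V ι G} {S : Set V}
  {a b c d t t₁ t₂ : ι}

theorem InSubtree.refl (𝒯 : RootedTreeDecomp V ι G) (t : ι) : 𝒯.InSubtree t t := ⟨0, rfl⟩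

theorem InSubtree.trans (hab : 𝒯.InSubtree a b) (hbc : 𝒯.InSubtree b c) : 𝒯.InSubtree a c := by
  obtain ⟨m, rfl⟩ := hab
  obtain ⟨n, rfl⟩ := hbc
  exact ⟨m + n, Function.iterate_add_apply _ m n c⟩

theorem InSubtree.total (had : 𝒯.InSubtree a d) (hbd : 𝒯.InSubtree b d) :
    𝒯.InSubtree a b ∨ 𝒯.InSubtree b a := by
  obtain ⟨m, rfl⟩ := had
  obtain ⟨n, rfl⟩ := hbd
  rcases le_total m n with h | h
  · exact .inr ⟨n - m, by rw [← Function.iterate_add_apply, Nat.sub_add_cancel h]⟩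
  · exact .inl ⟨m - n, by rw [← Function.iterate_add_apply, Nat.sub_add_cancel h]⟩

theorem InSubtree.eq_or_inSubtree_parent (h : 𝒯.InSubtree a b) :
    a = b ∨ 𝒯.InSubtree a (𝒯.parent b) := by
  obtain ⟨n | n, rfl⟩ := h
  · exact .inl rfl
  · exact .inr ⟨n, rfl⟩

theorem InSubtree.eq_or_exists_isParent (h : 𝒯.InSubtree t d) :
    d = t ∨ ∃ c, 𝒯.IsParent t c ∧ 𝒯.InSubtree c d := by
  obtain ⟨n, hn⟩ := h
  induction n with
  | zero => exact .inl hn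
  | succ n ih =>
    rw [Function.iterate_succ_apply'] at hn
    by_cases hroot : 𝒯.parent^[n] d = 𝒯.root
    · exact ih (by rw [← hn, hroot, 𝒯.parent_root])
    · exact .inr ⟨_, ⟨hroot, hn⟩, n, rfl⟩

theorem eq_root_of_isPeriodicPt {n : ℕ} (hn : 0 < n)
    (h : Function.IsPeriodicPt 𝒯.parent n t) : t = 𝒯.root := by
  obtain ⟨k, hk⟩ := 𝒯.reaches_root t
  calc t = 𝒯.parent^[n * k] t := (h.mul_const k).eq.symm
    _ = 𝒯.parent^[n * k - k] (𝒯.parent^[k] t) := by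
      rw [← Function.iterate_add_apply, Nat.sub_add_cancel (Nat.le_mul_of_pos_left k hn)]
    _ = 𝒯.root := by rw [hk, Function.iterate_fixed 𝒯.parent_root]

theorem IsParent.inSubtree (h : 𝒯.IsParent t c) : 𝒯.InSubtree t c := ⟨1, h.2⟩

theorem IsParent.not_inSubtree (h : 𝒯.IsParent t c) : ¬𝒯.InSubtree c t := by
  rintro ⟨n, hn⟩
  refine h.1 (eq_root_of_isPeriodicPt n.succ_pos ?_)
  change 𝒯.parent^[n] (𝒯.parent c) = c
  rw [h.2, hn]

theorem IsParent.not_inSubtree_sibling (ha : 𝒯.IsParent t a) (hb : 𝒯.IsParent t b)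
    (hab : a ≠ b) : ¬𝒯.InSubtree a b := by
  intro h
  obtain h | h := h.eq_or_inSubtree_parent
  · exact hab h
  · exact ha.not_inSubtree (hb.2 ▸ h)

theorem bag_subset_Vt (𝒯 : RootedTreeDecomp V ι G) (t : ι) : 𝒯.bag t ⊆ 𝒯.Vt t :=
  fun _ hv => ⟨t, .refl 𝒯 t, hv⟩

theorem InSubtree.Vt_subset (h : 𝒯.InSubtree a b) : 𝒯.Vt b ⊆ 𝒯.Vt a :=
  fun _ ⟨d, hd, hv⟩ => ⟨d, h.trans hd, hv⟩

theorem Vt_subset_bag_union_iUnion (𝒯 : RootedTreeDecomp V ι G) (t : ι) :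
    𝒯.Vt t ⊆ 𝒯.bag t ∪ ⋃ c ∈ {c | 𝒯.IsParent t c}, 𝒯.Vt c := by
  rintro v ⟨d, hd, hv⟩
  obtain rfl | ⟨c, hc, hcd⟩ := hd.eq_or_exists_isParent
  · exact .inl hv
  · exact .inr (Set.mem_biUnion hc ⟨d, hcd, hv⟩)

theorem Vt_inter_bag_subset_bag (h : ¬𝒯.InSubtree a b) : 𝒯.Vt a ∩ 𝒯.bag b ⊆ 𝒯.bag a := by
  rintro v ⟨⟨d, ⟨k, rfl⟩, hvd⟩, hvb⟩
  obtain ⟨m, -, hm⟩ := 𝒯.bags_connected v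
  obtain ⟨n, rfl, hbags⟩ := hm d hvd
  obtain ⟨l, hl, -⟩ := hm b hvb
  obtain hkn | hnk := le_total k n
  · exact hbags k hkn
  · have ham : 𝒯.InSubtree (𝒯.parent^[k] d) (𝒯.parent^[n] d) :=
      ⟨k - n, by rw [← Function.iterate_add_apply, Nat.sub_add_cancel hnk]⟩
    exact (h (ham.trans ⟨l, hl⟩)).elim

theorem Vt_inter_Vt_subset_bag (hab : ¬𝒯.InSubtree a b) (hba : ¬𝒯.InSubtree b a) :
    𝒯.Vt a ∩ 𝒯.Vt b ⊆ 𝒯.bag a := by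
  rintro v ⟨hva, d, hbd, hvd⟩
  have had : ¬𝒯.InSubtree a d := fun had => (had.total hbd).elim hab hba
  exact Vt_inter_bag_subset_bag had ⟨hva, hvd⟩

theorem IsParent.Vt_inter_bag_subset (h : 𝒯.IsParent t c) : 𝒯.Vt c ∩ 𝒯.bag t ⊆ 𝒯.bag c :=
  Vt_inter_bag_subset_bag h.not_inSubtree

theorem disjoint_LS_of_not_inSubtree (S : Set V) (hab : ¬𝒯.InSubtree a b) (hba : ¬𝒯.InSubtree b a) :
    Disjoint (𝒯.LS S a) (𝒯.LS S b) :=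
  Set.disjoint_left.2 fun _ ha hb => ha.1.2 (Vt_inter_Vt_subset_bag hab hba ⟨ha.1.1, hb.1.1⟩)

theorem isSChild_iff :
    𝒯.IsSChild S t c ↔ 𝒯.IsParent t c ∧ (𝒯.Vt c ∩ 𝒯.LS S t).Nonempty := by
  have hset : (𝒯.LS S c ∪ 𝒯.XS S c) \ (𝒯.RS S t ∪ 𝒯.XS S t) = 𝒯.Vt c ∩ 𝒯.LS S t := by
    ext v
    have hc : v ∈ 𝒯.bag c → v ∈ 𝒯.Vt c := fun hv => 𝒯.bag_subset_Vt c hv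
    simp only [LS, XS, RS, Lt, Rt, Set.mem_sdiff, Set.mem_union, Set.mem_inter_iff,
      Set.mem_compl_iff]
    tauto
  rw [IsSChild, hset]

theorem IsParent.Vt_inter_LS (h : 𝒯.IsParent t c) (hX : 𝒯.XS S c ⊆ 𝒯.XS S t) :
    𝒯.Vt c ∩ 𝒯.LS S t = 𝒯.LS S c := by
  ext v
  constructor
  · rintro ⟨hvc, ⟨-, hvt⟩, hvS⟩
    exact ⟨⟨hvc, fun hv => hvt (hX ⟨hv, hvS⟩).1⟩, hvS⟩
  · rintro ⟨⟨hvc, hv⟩, hvS⟩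
    exact ⟨hvc, ⟨h.inSubtree.Vt_subset hvc, fun hvt => hv (h.Vt_inter_bag_subset ⟨hvc, hvt⟩)⟩,
      hvS⟩

theorem IsSChild.LS_nonempty (h : 𝒯.IsSChild S t c) (hX : 𝒯.XS S c ⊆ 𝒯.XS S t) :
    (𝒯.LS S c).Nonempty :=
  h.1.Vt_inter_LS hX ▸ (isSChild_iff.1 h).2

theorem biUnion_isSChild_LS (hX : ∀ c, 𝒯.IsSChild S t c → 𝒯.XS S c ⊆ 𝒯.XS S t) :
    ⋃ c ∈ {c | 𝒯.IsSChild S t c}, 𝒯.LS S c = 𝒯.LS S t := by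
  apply Set.Subset.antisymm
  · exact Set.iUnion₂_subset fun c hc => hc.1.Vt_inter_LS (hX c hc) ▸ Set.inter_subset_right
  · intro v hv
    obtain hvt | hvc := 𝒯.Vt_subset_bag_union_iUnion t hv.1.1
    · exact (hv.1.2 hvt).elim
    · obtain ⟨c, hc, hvc⟩ := Set.mem_iUnion₂.1 hvc
      have hSc : 𝒯.IsSChild S t c := isSChild_iff.2 ⟨hc, v, hvc, hv⟩
      exact Set.mem_biUnion hSc (hc.Vt_inter_LS (hX c hSc) ▸ ⟨hvc, hv⟩)

theorem IsParent.RS_eq (h : 𝒯.IsParent t c) (hX : 𝒯.XS S c ⊆ 𝒯.XS S t) :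
    𝒯.RS S c = 𝒯.RS S t ∪ (𝒯.XS S t \ 𝒯.XS S c) ∪ (𝒯.LS S t \ 𝒯.LS S c) := by
  rw [← h.Vt_inter_LS hX]
  ext v
  have hVt : v ∈ 𝒯.Vt c → v ∈ 𝒯.Vt t := fun hv => h.inSubtree.Vt_subset hv
  have hbag : v ∈ 𝒯.bag c → v ∈ 𝒯.Vt c := fun hv => 𝒯.bag_subset_Vt c hv
  have hsep : v ∈ 𝒯.Vt c → v ∈ 𝒯.bag t → v ∈ 𝒯.bag c :=
    fun hvc hvt => h.Vt_inter_bag_subset ⟨hvc, hvt⟩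
  simp only [LS, XS, RS, Lt, Rt, Set.mem_sdiff, Set.mem_union, Set.mem_inter_iff,
    Set.mem_compl_iff]
  tauto

theorem AdmitsJoin.symm (h : 𝒯.AdmitsJoin S t t₁ t₂) : 𝒯.AdmitsJoin S t t₂ t₁ :=
  have ⟨hne, h₁, h₂, honly, hX⟩ := h
  ⟨hne.symm, h₂, h₁, fun c hc => (honly c hc).symm, Set.union_comm _ _ ▸ hX⟩

theorem AdmitsJoin.XS_subset_left (h : 𝒯.AdmitsJoin S t t₁ t₂) : 𝒯.XS S t₁ ⊆ 𝒯.XS S t :=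
  Set.subset_union_left.trans h.2.2.2.2

theorem AdmitsJoin.setOf_isSChild (h : 𝒯.AdmitsJoin S t t₁ t₂) :
    {c | 𝒯.IsSChild S t c} = {t₁, t₂} := by
  obtain ⟨-, h₁, h₂, honly, -⟩ := h
  exact Set.Subset.antisymm honly (Set.pair_subset h₁ h₂)

theorem AdmitsJoin.LS_union (h : 𝒯.AdmitsJoin S t t₁ t₂) :
    𝒯.LS S t₁ ∪ 𝒯.LS S t₂ = 𝒯.LS S t := by
  have hX : ∀ c, 𝒯.IsSChild S t c → 𝒯.XS S c ⊆ 𝒯.XS S t := by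
    intro c hc
    obtain rfl | rfl := h.2.2.2.1 c hc
    exacts [h.XS_subset_left, h.symm.XS_subset_left]
  rw [← biUnion_isSChild_LS hX, h.setOf_isSChild, Set.biUnion_pair]

theorem AdmitsJoin.disjoint_LS (h : 𝒯.AdmitsJoin S t t₁ t₂) :
    Disjoint (𝒯.LS S t₁) (𝒯.LS S t₂) :=
  have ⟨hne, ⟨h₁, _⟩, ⟨h₂, _⟩, _⟩ := h
  disjoint_LS_of_not_inSubtree S (h₁.not_inSubtree_sibling h₂ hne)
    (h₂.not_inSubtree_sibling h₁ hne.symm)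

theorem AdmitsJoin.LS_left_nonempty (h : 𝒯.AdmitsJoin S t t₁ t₂) : (𝒯.LS S t₁).Nonempty :=
  h.2.1.LS_nonempty h.XS_subset_left

theorem AdmitsJoin.RS_left (h : 𝒯.AdmitsJoin S t t₁ t₂) :
    𝒯.RS S t₁ = 𝒯.RS S t ∪ (𝒯.XS S t \ 𝒯.XS S t₁) ∪ 𝒯.LS S t₂ := by
  have hdiff : 𝒯.LS S t \ 𝒯.LS S t₁ = 𝒯.LS S t₂ := by
    rw [← h.LS_union, Set.union_sdiff_cancel_left h.disjoint_LS.le_bot]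
  rw [h.2.1.1.RS_eq h.XS_subset_left, hdiff]

end RootedTreeDecomp

theorem statement7_general {V ι : Type} {G : SimpleGraph V}
    (𝒯 : RootedTreeDecomp V ι G) (S : Set V) (t t₁ t₂ : ι)
    (hop : 𝒯.AdmitsJoin S t t₁ t₂) :
    𝒯.LS S t₁ ∪ 𝒯.LS S t₂ = 𝒯.LS S t ∧
    𝒯.LS S t₁ ∩ 𝒯.LS S t₂ = ∅ ∧
    (𝒯.LS S t₁).Nonempty ∧ (𝒯.LS S t₂).Nonempty ∧
    𝒯.RS S t₁ = 𝒯.RS S t ∪ (𝒯.XS S t \ 𝒯.XS S t₁) ∪ 𝒯.LS S t₂ ∧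
    𝒯.RS S t₂ = 𝒯.RS S t ∪ (𝒯.XS S t \ 𝒯.XS S t₂) ∪ 𝒯.LS S t₁ :=
  ⟨hop.LS_union, hop.disjoint_LS.inter_eq, hop.LS_left_nonempty, hop.symm.LS_left_nonempty,
    hop.RS_left, hop.symm.RS_left⟩

/-- In an `S`-nice tree decomposition, if an `S`-bottom node `t`
admits `join` with the two `S`-children `t₁, t₂`, then
`L_{t₁}^S ∪ L_{t₂}^S = L_t^S`, `L_{t₁}^S ∩ L_{t₂}^S = ∅`, both `L_{t₁}^S` and
`L_{t₂}^S` are nonempty, `R_{t₁}^S = R_t^S ∪ (X_t^S ∖ X_{t₁}^S) ∪ L_{t₂}^S`, and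
`R_{t₂}^S = R_t^S ∪ (X_t^S ∖ X_{t₂}^S) ∪ L_{t₁}^S`. -/
theorem statement7 {V ι : Type} [Fintype V] [DecidableEq V] {G : SimpleGraph V}
    (𝒯 : RootedTreeDecomp V ι G) (S : Set V)
    (hnice : 𝒯.IsSNice S) (t t₁ t₂ : ι)
    (hbot : 𝒯.IsSBottom S t)
    (hop : 𝒯.AdmitsJoin S t t₁ t₂) :
    𝒯.LS S t₁ ∪ 𝒯.LS S t₂ = 𝒯.LS S t ∧
    𝒯.LS S t₁ ∩ 𝒯.LS S t₂ = ∅ ∧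
    (𝒯.LS S t₁).Nonempty ∧ (𝒯.LS S t₂).Nonempty ∧
    𝒯.RS S t₁ = 𝒯.RS S t ∪ (𝒯.XS S t \ 𝒯.XS S t₁) ∪ 𝒯.LS S t₂ ∧
    𝒯.RS S t₂ = 𝒯.RS S t ∪ (𝒯.XS S t \ 𝒯.XS S t₂) ∪ 𝒯.LS S t₁ :=
  statement7_general 𝒯 S t t₁ t₂ hop
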